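/- If A ⊆ ω^ω satisfies: for every slalom φ there is x ∈ A with x(n) ∉ φ(n) for every n, then Player II has a winning strategy in the anti-localizing game with respect to A (always play 1). Consequently the minimal cardinality of a family for which Player II has a winning strategy in the anti-localizing game is at most cov(M). -/

import Mathlib

open Cardinal

/-- `φ` is a slalom: `φ(n)` is a set of `n+1` naturals. -/
def IsSlalom (φ : ℕ → Finset ℕ) : Prop := ∀ n, (φ n).card = n + 1

/-- Player II wins a play of the anti-localizing game with respect to `A`:
`a` is Player I's sequence of moves, `i` is Player II's sequence of moves. -/
def IIWinsAntiLoc (A : Set (ℕ → ℕ)) (a : ℕ → Finset ℕ) (i : ℕ → Bool) : Prop :=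
  {k | i k = true}.Infinite ∧ ∃ x ∈ A, ∀ k, (i k = true ↔ x k ∉ a k)

/-- Player II has a winning strategy in the anti-localizing game with respect to `A`. -/
def IIWinStratAntiLoc (A : Set (ℕ → ℕ)) : Prop :=
  ∃ τ : List (Finset ℕ) → Bool, ∀ a : ℕ → Finset ℕ, IsSlalom a →
    IIWinsAntiLoc A a (fun k => τ ((List.range (k + 1)).map a))

/-- `cov(M)`: the least number of meager sets covering the Cantor space. -/
noncomputable def covMeager : Cardinal :=
  sInf { c | ∃ S : Set (Set (ℕ → Bool)),
    (∀ s ∈ S, IsMeagre s) ∧ ⋃₀ S = Set.univ ∧ #S = c }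

/-!
Always playing `1` wins against any slalom evaded everywhere by a member of `A`. For the bound by
`cov(M)` we follow Bartoszyński and show that if slaloms capture every family of functions indexed
by `ι`, then `ι` many meagre sets do not cover the Cantor space. Capturing lets a single function
`g` agree infinitely often with each of `ι` many given functions, even inside prescribed infinite
sets. A meagre set comes with a function `d` and sequences `t n` such that it omits every `z` that
agrees with `t n` on `[n, d n)` for infinitely many `n`. A first guess yields disjoint blocks
`[m k, m (k + 1))` of which, for every `i`, infinitely many satisfy `d i (m k) ≤ m (k + 1)`; a
second guess, made inside these infinite sets of blocks, is correct on infinitely many of them for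
every `i`, and gluing the guessed blocks gives a point outside all the meagre sets.
-/

open Set Function

section Combinatorics

variable {κ α : Type*}

theorem exists_forall_eq_of_pairwise_disjoint {β : α → Type*} [∀ a, Nonempty (β a)]
    {s : κ → Set α} (hs : Pairwise (Disjoint on s)) (f : ∀ k, ∀ a ∈ s k, β a) :
    ∃ g : ∀ a, β a, ∀ k a (ha : a ∈ s k), g a = f k a ha := by
  have value (a : α) : ∃ b : β a, ∀ k (ha : a ∈ s k), b = f k a ha := by
    by_cases covered : ∃ k, a ∈ s k
    · obtain ⟨k, ha⟩ := covered
      refine ⟨f k a ha, fun l hl ↦ ?_⟩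
      obtain rfl : k = l := hs.eq (not_disjoint_iff.2 ⟨a, ha, hl⟩)
      rfl
    · exact ⟨Classical.arbitrary _, fun k ha ↦ (covered ⟨k, ha⟩).elim⟩
  choose g hg using value
  exact ⟨g, fun k a ha ↦ hg a k ha⟩

theorem exists_pairwise_disjoint_infinite (α : Type*) [Infinite α] :
    ∃ C : ℕ → Set α, Pairwise (Disjoint on C) ∧ ∀ n, (C n).Infinite := by
  let e := Infinite.natEmbedding α
  let column (n : ℕ) : Set ℕ := (fun k ↦ k.unpair.1) ⁻¹' {n}
  refine ⟨fun n ↦ (column n).image e, fun m n hmn ↦ ?_, fun n ↦ ?_⟩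
  · exact (disjoint_image_iff e.injective).2 (pairwise_disjoint_fiber _ hmn)
  · have column_infinite : (column n).Infinite :=
      infinite_of_injective_forall_mem (f := Nat.pair n)
        (fun i j hij ↦ (Nat.pair_eq_pair.1 hij).2) fun j ↦ by simp [column]
    exact column_infinite.image e.injective.injOn

theorem exists_injective_mem_of_lt_card {r : κ → ℕ} (hr : Injective r) {T : κ → Finset α}
    (hT : ∀ k, r k < (T k).card) : ∃ p : κ → α, Injective p ∧ ∀ k, p k ∈ T k := by
  classical
  refine (Finset.all_card_le_biUnion_card_iff_exists_injective T).1 fun s ↦ ?_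
  obtain rfl | hs := s.eq_empty_or_nonempty
  · simp
  obtain ⟨k, hk, hmax⟩ := s.exists_max_image r hs
  calc s.card = (s.image r).card := (Finset.card_image_of_injective s hr).symm
    _ ≤ (Finset.range (r k + 1)).card := Finset.card_le_card fun n hn ↦ by
      obtain ⟨l, hl, rfl⟩ := Finset.mem_image.1 hn
      exact Finset.mem_range_succ_iff.2 (hmax l hl)
    _ ≤ (T k).card := by simpa using hT k
    _ ≤ (s.biUnion T).card := Finset.card_le_card (Finset.subset_biUnion_of_mem T hk)

end Combinatorics

section Blocks

variable {d b m : ℕ → ℕ}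

/- Let `m k < n ≤ m (k + 1)` with `d (d n) ≤ b n`. If `d n ≤ m (k + 1)`, then block `k` works;
otherwise `d (m (k + 1)) ≤ d (d n) ≤ b n ≤ m (k + 2)` and block `k + 1` does. -/
theorem infinite_setOf_map_le_map_succ (hd : Monotone d) (hb : Monotone b) (hm : StrictMono m)
    (hbm : ∀ k, b (m k) ≤ m (k + 1)) (hdb : {n | d (d n) ≤ b n}.Infinite) :
    {k | d (m k) ≤ m (k + 1)}.Infinite := by
  refine infinite_of_forall_exists_gt fun a ↦ ?_
  obtain ⟨n, hn, han⟩ := hdb.exists_gt (m (a + 1))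
  obtain ⟨k, hkn, hnk⟩ := hm.exists_between_of_tendsto_atTop hm.tendsto_atTop
    ((hm.monotone (Nat.zero_le (a + 1))).trans_lt han)
  have hak : a < k := Nat.succ_lt_succ_iff.1 (hm.lt_iff_lt.1 (han.trans_le hnk))
  by_cases hdn : d n ≤ m (k + 1)
  · exact ⟨k, (hd hkn.le).trans hdn, hak⟩
  · refine ⟨k + 1, ?_, hak.trans k.lt_succ_self⟩
    calc d (m (k + 1)) ≤ d (d n) := hd (not_le.1 hdn).le
      _ ≤ b n := hn
      _ ≤ b (m (k + 1)) := hb hnk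
      _ ≤ m (k + 2) := hbm (k + 1)

theorem exists_strictMono_map_le_map_succ (b : ℕ → ℕ) :
    ∃ m : ℕ → ℕ, StrictMono m ∧ ∀ k, b (m k) ≤ m (k + 1) := by
  let next (n : ℕ) : ℕ := max (b n) (n + 1)
  refine ⟨fun k ↦ next^[k] 0, strictMono_nat_of_lt_succ fun k ↦ ?_, fun k ↦ ?_⟩ <;>
    simp only [iterate_succ_apply']
  · exact (Nat.lt_succ_self _).trans_le (le_max_right _ _)
  · exact le_max_left _ _

end Blocks

section Topology

variable {ι : Type*} {E : ι → Type*} [∀ i, TopologicalSpace (E i)]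

theorem isMeagre_singleton_pi [Infinite ι] [∀ i, T1Space (E i)] [∀ i, Nontrivial (E i)]
    (x : ∀ i, E i) : IsMeagre {x} := by
  classical
  choose y hy using fun i ↦ exists_ne (x i)
  have update_tendsto : Filter.Tendsto (fun i ↦ update x i (y i)) Filter.cofinite (nhds x) :=
    tendsto_pi_nhds.2 fun j ↦ tendsto_nhds_of_eventually_eq <|
      (Filter.eventually_cofinite_ne j).mono fun i hij ↦ update_of_ne hij.symm _ _
  refine (isNowhereDense_iff_forall_notMem_nhds.2 ?_).isMeagre
  rintro _ rfl hx
  rw [closure_singleton] at hx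
  obtain ⟨i, hi⟩ := (update_tendsto.eventually hx).exists
  exact hy i (by simpa using congrFun (mem_singleton_iff.1 hi) i)

theorem continuous_updateFinset [DecidableEq ι] {F : Finset ι} (s : ∀ i : F, E i) :
    Continuous fun x : ∀ i, E i ↦ updateFinset x F s := by
  refine continuous_pi fun i ↦ ?_
  by_cases hi : i ∈ F <;> simp only [updateFinset, hi, dite_true, dite_false] <;> fun_prop

variable [∀ i, DiscreteTopology (E i)]

theorem dense_preimage_updateFinset [DecidableEq ι] {F : Finset ι} (s : ∀ i : F, E i)
    {W : Set (∀ i, E i)} (hW : Dense W) : Dense ((fun x ↦ updateFinset x F s) ⁻¹' W) := by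
  refine dense_iff_inter_open.2 fun U hU ⟨x, hx⟩ ↦ ?_
  have isOpen_restrict_eq : IsOpen (F.restrict ⁻¹' {s} : Set (∀ i, E i)) :=
    (isOpen_discrete _).preimage (by fun_prop)
  obtain ⟨y, ⟨hys, hyU⟩, hyW⟩ := hW.inter_open_nonempty
    (F.restrict ⁻¹' {s} ∩ (fun y ↦ updateFinset y F (F.restrict x)) ⁻¹' U)
    (isOpen_restrict_eq.inter (hU.preimage (continuous_updateFinset _)))
    ⟨updateFinset x F s, restrict_updateFinset x s, by
      simpa [updateFinset_updateFinset_of_subset] using hx⟩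
  refine ⟨updateFinset y F (F.restrict x), hyU, ?_⟩
  obtain rfl : F.restrict y = s := hys
  simpa [updateFinset_updateFinset_of_subset] using hyW

/- Take `t` such that grafting any of the finitely many patterns on `F` onto it lands in `W`: these
`t` form a dense open set, and a basic neighbourhood of `t` inside it supplies `H`. -/
theorem exists_forall_mem_of_eq_on_sdiff [∀ i, Finite (E i)] [∀ i, Nonempty (E i)]
    {W : Set (∀ i, E i)} (hWo : IsOpen W) (hWd : Dense W) (F : Finset ι) :
    ∃ (H : Finset ι) (t : ∀ i, E i), ∀ z : ∀ i, E i, (∀ i ∈ H, i ∉ F → z i = t i) → z ∈ W := by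
  classical
  let graftInto (s : ∀ i : F, E i) : Set (∀ i, E i) := (fun x ↦ updateFinset x F s) ⁻¹' W
  have graftInto_isOpen (s) : IsOpen (graftInto s) := hWo.preimage (continuous_updateFinset s)
  have inter_dense : Dense (⋂ s, graftInto s) :=
    (finite_range graftInto).dense_sInter (forall_mem_range.2 graftInto_isOpen)
      (forall_mem_range.2 fun s ↦ dense_preimage_updateFinset s hWd)
  obtain ⟨t, ht⟩ := inter_dense.nonempty
  obtain ⟨H, u, hu, hsub⟩ := isOpen_pi_iff.1 (isOpen_iInter_of_finite graftInto_isOpen) t ht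
  refine ⟨H, t, fun z hz ↦ ?_⟩
  have graft_mem : updateFinset z F (F.restrict t) ∈ graftInto (F.restrict z) := by
    refine mem_iInter.1 (hsub fun i hi ↦ ?_) _
    by_cases hiF : i ∈ F
    · simpa [updateFinset, hiF] using (hu i hi).2
    · simpa [updateFinset, hiF, hz i hi hiF] using (hu i hi).2
  simpa [graftInto, updateFinset_updateFinset_of_subset] using graft_mem

theorem exists_monotone_forall_notMem_of_isMeagre {E : ℕ → Type*} [∀ n, TopologicalSpace (E n)]
    [∀ n, DiscreteTopology (E n)] [∀ n, Finite (E n)] [∀ n, Nonempty (E n)]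
    {M : Set (∀ n, E n)} (hM : IsMeagre M) :
    ∃ d : ℕ → ℕ, Monotone d ∧ ∃ t : ℕ → ∀ n, E n, ∀ z : ∀ n, E n,
      {n | ∀ j ∈ Ico n (d n), z j = t n j}.Infinite → z ∉ M := by
  obtain ⟨D, hDM, hDδ, hDd⟩ := mem_residual.1 hM
  obtain ⟨U, hU, rfl⟩ := hDδ.eq_iInter_nat
  let W (n : ℕ) : Set (∀ n, E n) := ⋂ k ∈ Iic n, U k
  have W_isOpen (n) : IsOpen (W n) := (finite_Iic n).isOpen_biInter fun k _ ↦ hU k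
  have W_dense (n) : Dense (W n) :=
    hDd.mono (subset_iInter₂ fun k _ ↦ iInter_subset U k)
  choose H t hHt using fun n ↦
    exists_forall_mem_of_eq_on_sdiff (W_isOpen n) (W_dense n) (Finset.range n)
  let d : ℕ → ℕ := partialSups fun n ↦ (H n).sup id + 1
  have lt_d {n j : ℕ} (hj : j ∈ H n) : j < d n :=
    (Nat.lt_succ_of_le (Finset.le_sup (f := id) hj)).trans_le
      (le_partialSups (fun n ↦ (H n).sup id + 1) n)
  refine ⟨d, partialSups_monotone _, t, fun z hz hzM ↦ hDM (mem_iInter.2 fun k ↦ ?_) hzM⟩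
  obtain ⟨n, hn, hkn⟩ := hz.exists_gt k
  have mem_W : z ∈ W n := hHt n z fun j hj hjn ↦
    hn j ⟨not_lt.1 (mt Finset.mem_range.2 hjn), lt_d hj⟩
  exact mem_iInter₂.1 mem_W k hkn.le

end Topology

/-- Every family of functions indexed by `ι` has a single slalom that captures each of its members
in at least one coordinate. This says that `#ι` is smaller than the size of any family evading all
slaloms, but is stated for an index type so that no cardinal arithmetic is needed. -/
def SlalomCapturable (ι : Type*) : Prop :=
  ∀ x : ι → ℕ → ℕ, ∃ φ : ℕ → Finset ℕ, IsSlalom φ ∧ ∀ i, ∃ n, x i n ∈ φ n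

namespace SlalomCapturable

variable {ι : Type*}

section Guessing

variable {α : Type*} {β : α → Type*} [∀ a, Countable (β a)] [∀ a, Nonempty (β a)]

/- Reserve disjoint blocks `B n` of `n + 1` points and let the slalom capture codes of the
restrictions `x i |_{B n}`. It offers `n + 1` candidates for this restriction, so `g` can follow
a different candidate at each point of `B n`. -/
theorem exists_forall_exists_eq [Infinite α] (h : SlalomCapturable ι) (x : ι → ∀ a, β a) :
    ∃ g : ∀ a, β a, ∀ i, ∃ a, g a = x i a := by
  obtain ⟨C, hC, hCinf⟩ := exists_pairwise_disjoint_infinite α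
  choose B hBC hBcard using fun n ↦ (hCinf n).exists_subset_card_eq (n + 1)
  choose code hcode using fun n ↦ exists_injective_nat (∀ a : B n, β a)
  obtain ⟨φ, hφ, hxφ⟩ := h fun i n ↦ code n ((B n).restrict (x i))
  let enum (n : ℕ) : B n ≃ φ n := Finset.equivOfCardEq ((hBcard n).trans (hφ n).symm)
  have B_disjoint : Pairwise (Disjoint on fun n ↦ (B n : Set α)) :=
    fun m n hmn ↦ (hC hmn).mono (hBC m) (hBC n)
  obtain ⟨g, hg⟩ := exists_forall_eq_of_pairwise_disjoint B_disjoint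
    fun n a ha ↦ invFun (code n) (enum n ⟨a, ha⟩) ⟨a, ha⟩
  refine ⟨g, fun i ↦ ?_⟩
  obtain ⟨n, hn⟩ := hxφ i
  obtain ⟨⟨a, ha⟩, hea⟩ := (enum n).surjective ⟨_, hn⟩
  refine ⟨a, ?_⟩
  rw [hg n a ha, hea, leftInverse_invFun (hcode n)]
  rfl

theorem exists_forall_infinite_eq [Infinite α] (h : SlalomCapturable ι) (x : ι → ∀ a, β a) :
    ∃ g : ∀ a, β a, ∀ i, {a | g a = x i a}.Infinite := by
  obtain ⟨C, hC, hCinf⟩ := exists_pairwise_disjoint_infinite α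
  have guess (n : ℕ) : ∃ g : ∀ a : C n, β a, ∀ i, ∃ a, g a = x i a :=
    have := (hCinf n).to_subtype
    h.exists_forall_exists_eq fun i (a : C n) ↦ x i a
  choose G a hGa using guess
  obtain ⟨g, hg⟩ := exists_forall_eq_of_pairwise_disjoint hC fun n a ha ↦ G n ⟨a, ha⟩
  refine ⟨g, fun i ↦ infinite_of_injective_forall_mem (f := fun n ↦ (a n i : α)) ?_ fun n ↦ ?_⟩
  · exact fun m n hmn ↦ hC.eq (not_disjoint_iff.2 ⟨a m i, (a m i).2, by
      simpa only [hmn] using (a n i).2⟩)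
  · exact (hg n _ (a n i).2).trans (hGa n i)

/- Guess `n + 1` values of `x i` on points of `X i` at once; infinitely many of these guesses are
correct, and Hall's theorem selects from them pairwise distinct points at which `g` follows them. -/
theorem exists_forall_infinite_mem_and_eq [Countable α] (h : SlalomCapturable ι) {X : ι → Set α}
    (hX : ∀ i, (X i).Infinite) (x : ι → ∀ a, β a) :
    ∃ g : ∀ a, β a, ∀ i, {a ∈ X i | g a = x i a}.Infinite := by
  choose T hTX hTcard using fun i n ↦ (hX i).exists_subset_card_eq (n + 1)
  have : Nonempty (Σ S : Finset α, ∀ a : S, β a) := ⟨∅, fun a ↦ Classical.arbitrary _⟩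
  obtain ⟨G, hG⟩ := h.exists_forall_infinite_eq
    (β := fun _ : ℕ ↦ Σ S : Finset α, ∀ a : S, β a)
    fun i n ↦ ⟨T i n, (T i n).restrict (x i)⟩
  obtain ⟨p, hp, hpG⟩ := exists_injective_mem_of_lt_card
    (r := ((↑) : {n // n < (G n).1.card} → ℕ)) Subtype.val_injective
    (T := fun n ↦ (G n).1) Subtype.prop
  obtain ⟨g, hg⟩ := exists_forall_eq_of_pairwise_disjoint (s := fun n ↦ {p n})
    (fun m n hmn ↦ disjoint_singleton.2 (hp.ne hmn))
    fun n a ha ↦ (G n).2 ⟨a, mem_singleton_iff.1 ha ▸ hpG n⟩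
  refine ⟨g, fun i ↦ ?_⟩
  let N : Set ℕ := {n | G n = ⟨T i n, (T i n).restrict (x i)⟩}
  have lt_card (n : N) : (n : ℕ) < (G n).1.card := by
    rw [n.2, hTcard]
    exact Nat.lt_succ_self _
  have : Infinite N := (hG i).to_subtype
  refine infinite_of_injective_forall_mem (f := fun n : N ↦ p ⟨n, lt_card n⟩) ?_ fun n ↦ ?_
  · exact fun m n hmn ↦ Subtype.ext (Subtype.mk.inj (hp hmn))
  have eq_of_mem {S : Σ S : Finset α, ∀ a : S, β a} (hS : S = ⟨T i n, (T i n).restrict (x i)⟩)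
      {a : α} (ha : a ∈ S.1) : a ∈ X i ∧ S.2 ⟨a, ha⟩ = x i a := by
    subst hS
    exact ⟨hTX i n ha, rfl⟩
  obtain ⟨mem_X, value_eq⟩ := eq_of_mem n.2 (hpG ⟨n, lt_card n⟩)
  exact ⟨mem_X, (hg _ _ rfl).trans value_eq⟩

end Guessing

theorem exists_strictMono_forall_infinite_map_le_map_succ (h : SlalomCapturable ι)
    {d : ι → ℕ → ℕ} (hd : ∀ i, Monotone (d i)) :
    ∃ m : ℕ → ℕ, StrictMono m ∧ ∀ i, {k | d i (m k) ≤ m (k + 1)}.Infinite := by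
  obtain ⟨g, hg⟩ := h.exists_forall_infinite_eq fun i n ↦ d i (d i n)
  obtain ⟨m, hm, hgm⟩ := exists_strictMono_map_le_map_succ (partialSups g)
  refine ⟨m, hm, fun i ↦ infinite_setOf_map_le_map_succ (hd i) (partialSups_monotone g) hm hgm ?_⟩
  exact (hg i).mono fun n hn ↦ (ge_of_eq hn).trans (le_partialSups g n)

theorem exists_forall_notMem_of_isMeagre {E : ℕ → Type*} [∀ n, TopologicalSpace (E n)]
    [∀ n, DiscreteTopology (E n)] [∀ n, Finite (E n)] [∀ n, Nonempty (E n)]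
    (h : SlalomCapturable ι) {M : ι → Set (∀ n, E n)} (hM : ∀ i, IsMeagre (M i)) :
    ∃ z, ∀ i, z ∉ M i := by
  choose d hd t ht using fun i ↦ exists_monotone_forall_notMem_of_isMeagre (hM i)
  obtain ⟨m, hm, hdm⟩ := h.exists_strictMono_forall_infinite_map_le_map_succ hd
  let block (k : ℕ) : Set ℕ := Ico (m k) (m (k + 1))
  obtain ⟨g, hg⟩ := h.exists_forall_infinite_mem_and_eq (β := fun k ↦ ∀ j : block k, E j) hdm
    fun i k j ↦ t i (m k) j
  obtain ⟨z, hz⟩ := exists_forall_eq_of_pairwise_disjoint (s := block)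
    hm.monotone.pairwise_disjoint_on_Ico_succ fun k j hj ↦ g k ⟨j, hj⟩
  refine ⟨z, fun i ↦ ht i z (((hg i).image hm.injective.injOn).mono ?_)⟩
  rintro _ ⟨k, ⟨hdk, hgk⟩, rfl⟩ j hj
  have j_mem : j ∈ block k := Ico_subset_Ico_right hdk hj
  rw [hz k j j_mem, hgk]

end SlalomCapturable

theorem iiWinStratAntiLoc_of_forall_exists_notMem {A : Set (ℕ → ℕ)}
    (hA : ∀ φ : ℕ → Finset ℕ, IsSlalom φ → ∃ x ∈ A, ∀ n, x n ∉ φ n) : IIWinStratAntiLoc A := by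
  refine ⟨fun _ ↦ true, fun a ha ↦ ⟨by simpa using infinite_univ, ?_⟩⟩
  obtain ⟨x, hx, hxa⟩ := hA a ha
  exact ⟨x, hx, fun k ↦ by simpa using hxa k⟩

theorem exists_iiWinStratAntiLoc_mk_le_of_not_slalomCapturable {ι : Type}
    (h : ¬SlalomCapturable ι) : ∃ A : Set (ℕ → ℕ), IIWinStratAntiLoc A ∧ #A ≤ #ι := by
  rw [SlalomCapturable] at h
  push Not at h
  obtain ⟨x, hx⟩ := h
  refine ⟨range x, iiWinStratAntiLoc_of_forall_exists_notMem fun φ hφ ↦ ?_, mk_range_le⟩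
  exact exists_range_iff.2 (hx φ hφ)

theorem exists_isMeagre_cover_mk_eq_covMeager :
    ∃ S : Set (Set (ℕ → Bool)), (∀ s ∈ S, IsMeagre s) ∧ ⋃₀ S = Set.univ ∧ #S = covMeager := by
  refine csInf_mem (s := {c | ∃ S : Set (Set (ℕ → Bool)),
    (∀ s ∈ S, IsMeagre s) ∧ ⋃₀ S = Set.univ ∧ #S = c}) ⟨_, range singleton, ?_, ?_, rfl⟩
  · exact forall_mem_range.2 isMeagre_singleton_pi
  · rw [sUnion_range, iUnion_of_singleton]

theorem stmt10 :
    (∀ A : Set (ℕ → ℕ),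
      (∀ φ : ℕ → Finset ℕ, IsSlalom φ → ∃ x ∈ A, ∀ n, x n ∉ φ n) →
      IIWinStratAntiLoc A) ∧
    sInf { c | ∃ A : Set (ℕ → ℕ), IIWinStratAntiLoc A ∧ #A = c } ≤ covMeager := by
  refine ⟨fun A ↦ iiWinStratAntiLoc_of_forall_exists_notMem, ?_⟩
  obtain ⟨S, hS, hScover, hScard⟩ := exists_isMeagre_cover_mk_eq_covMeager
  have not_capturable : ¬SlalomCapturable S := fun h ↦ by
    obtain ⟨z, hz⟩ := h.exists_forall_notMem_of_isMeagre fun s : S ↦ hS s s.2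
    obtain ⟨s, hs, hzs⟩ := sUnion_eq_univ_iff.1 hScover z
    exact hz ⟨s, hs⟩ hzs
  obtain ⟨A, hA, hAS⟩ := exists_iiWinStratAntiLoc_mk_le_of_not_slalomCapturable not_capturable
  calc sInf { c | ∃ A : Set (ℕ → ℕ), IIWinStratAntiLoc A ∧ #A = c } ≤ #A := csInf_le' ⟨A, hA, rfl⟩
    _ ≤ #S := hAS
    _ = covMeager := hScard
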